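/- Let M be a reduced G_C-perfect R-module of G_C-dimension n. Then Ext_R^i(Tr_C(M), C) ≅ Ext_R^{i+n-1}(Ext_R^n(M,C), C) for all i > 0. -/

import Mathlib

open CategoryTheory TensorProduct

noncomputable section

universe u

variable (R : Type u) [CommRing R]

/-- The `i`-th Ext module `Ext_R^i(M, N)`. -/
def ExtM (M N : ModuleCat.{u} R) (i : ℕ) : ModuleCat.{u} R :=
  ((Ext R (ModuleCat.{u} R) i).obj (Opposite.op M)).obj N

/-- The `i`-th Tor module `Tor_i^R(M, N)`. -/
def TorM (M N : ModuleCat.{u} R) (i : ℕ) : ModuleCat.{u} R :=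
  ((Tor (ModuleCat.{u} R) i).obj M).obj N

/-- The biduality (evaluation) map `M → Hom_R(Hom_R(M, C), C)`. -/
def bidualityMap (C M : ModuleCat.{u} R) :
    ↥M →ₗ[R] ((↥M →ₗ[R] ↥C) →ₗ[R] ↥C) :=
  (LinearMap.id : (↥M →ₗ[R] ↥C) →ₗ[R] (↥M →ₗ[R] ↥C)).flip

/-- `C` is a semidualizing `R`-module. -/
def IsSemidualizing (C : ModuleCat.{u} R) : Prop :=
  Module.Finite R ↥C ∧
  Function.Bijective (fun r : R => (r • LinearMap.id : ↥C →ₗ[R] ↥C)) ∧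
  ∀ i : ℕ, 0 < i → Subsingleton (ExtM R C C i)

/-- `M` is totally `C`-reflexive. -/
def IsTotallyCReflexive (C M : ModuleCat.{u} R) : Prop :=
  Module.Finite R ↥M ∧
  Function.Bijective (bidualityMap R C M) ∧
  (∀ i : ℕ, 0 < i → Subsingleton (ExtM R M C i)) ∧
  (∀ i : ℕ, 0 < i → Subsingleton (ExtM R (ModuleCat.of R (↥M →ₗ[R] ↥C)) C i))

/-- `G_C`-dimension of `M` is at most `n`: there is an exact sequence
`0 → X_n → ⋯ → X_0 → M → 0` with each `X_i` totally `C`-reflexive. -/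
def gcdimLE (C : ModuleCat.{u} R) : ℕ → ModuleCat.{u} R → Prop
  | 0, M => IsTotallyCReflexive R C M
  | n+1, M => ∃ (X K : ModuleCat.{u} R) (f : ↥K →ₗ[R] ↥X) (g : ↥X →ₗ[R] ↥M),
      Function.Injective f ∧ Function.Surjective g ∧
      LinearMap.ker g = LinearMap.range f ∧
      IsTotallyCReflexive R C X ∧ gcdimLE C n K

/-- The `G_C`-dimension of `M`, as an element of `ℕ∞`. -/
def gcdim (C M : ModuleCat.{u} R) : ℕ∞ :=
  sInf ((fun n : ℕ => (n : ℕ∞)) '' {n | gcdimLE R C n M})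

/-- `grade_R(M) = inf { i | Ext_R^i(M, R) ≠ 0 }`, with `grade 0 = ∞`. -/
def gradeR (M : ModuleCat.{u} R) : ℕ∞ :=
  sInf ((fun i : ℕ => (i : ℕ∞)) ''
    {i | ¬ Subsingleton (ExtM R M (ModuleCat.of R R) i)})

/-- Reduced grade of `M` with respect to `C`. -/
def rgrade (C M : ModuleCat.{u} R) : ℕ∞ :=
  sInf ((fun i : ℕ => (i : ℕ∞)) ''
    {i | 0 < i ∧ ¬ Subsingleton (ExtM R M C i)})

/-- `M` is reduced `G_C`-perfect. -/
def IsReducedGCPerfect (C M : ModuleCat.{u} R) : Prop :=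
  gcdim R C M ≠ ⊤ ∧ rgrade R C M = gcdim R C M

/-- `M` is `G_C`-perfect. -/
def IsGCPerfect (C M : ModuleCat.{u} R) : Prop :=
  gcdim R C M ≠ ⊤ ∧ gradeR R M = gcdim R C M

/-- `π : P → M` is a projective cover: `P` projective, `π` surjective with superfluous kernel. -/
def IsProjectiveCover {P M : ModuleCat.{u} R} (π : ↥P →ₗ[R] ↥M) : Prop :=
  Module.Projective R ↥P ∧ Function.Surjective π ∧
  ∀ N : Submodule R ↥P, N ⊔ LinearMap.ker π = ⊤ → N = ⊤

/-- `P₁ →d P₀ →π M → 0` is a minimal projective presentation of `M`. -/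
def IsMinimalPresentation {P1 P0 M : ModuleCat.{u} R}
    (d : ↥P1 →ₗ[R] ↥P0) (π : ↥P0 →ₗ[R] ↥M) : Prop :=
  Module.Finite R ↥P1 ∧ Module.Finite R ↥P0 ∧
  IsProjectiveCover R π ∧
  LinearMap.range d = LinearMap.ker π ∧
  Module.Projective R ↥P1 ∧
  ∀ N : Submodule R ↥P1, N ⊔ LinearMap.ker d = ⊤ → N = ⊤

/-- `T` is (a module isomorphic to) the transpose `Tr_C(M)` of `M` with respect to `C`,
computed from a minimal projective presentation of `M`. -/
def IsTransposeC (C M T : ModuleCat.{u} R) : Prop :=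
  ∃ (P1 P0 : ModuleCat.{u} R) (d : ↥P1 →ₗ[R] ↥P0) (π : ↥P0 →ₗ[R] ↥M),
    IsMinimalPresentation R d π ∧
    Nonempty (↥T ≃ₗ[R]
      ((↥P1 →ₗ[R] ↥C) ⧸ LinearMap.range (LinearMap.lcomp R ↥C d)))

/-- `T` is the usual Auslander transpose `Tr(M) = Tr_R(M)`. -/
def IsTranspose (M T : ModuleCat.{u} R) : Prop :=
  IsTransposeC R (ModuleCat.of R R) M T

/-- `S` is (a module isomorphic to) the first syzygy `Ω N`, i.e. the kernel of a
projective cover of `N`. -/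
def IsSyzygyOf (N S : ModuleCat.{u} R) : Prop :=
  ∃ (P : ModuleCat.{u} R) (π : ↥P →ₗ[R] ↥N),
    Module.Finite R ↥P ∧ IsProjectiveCover R π ∧
    Nonempty (↥S ≃ₗ[R] LinearMap.ker π)

/-- `S` is (a module isomorphic to) the `n`-th syzygy `Ωⁿ M`. -/
def IsNthSyzygy : ℕ → ModuleCat.{u} R → ModuleCat.{u} R → Prop
  | 0, M, S => Nonempty (↥S ≃ₗ[R] ↥M)
  | n+1, M, S => ∃ K : ModuleCat.{u} R, IsNthSyzygy n M K ∧ IsSyzygyOf R K S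

/-- `L` is (a module isomorphic to) `λ M = Ω Tr M`. -/
def IsLambda (M L : ModuleCat.{u} R) : Prop :=
  ∃ T : ModuleCat.{u} R, IsTranspose R M T ∧ IsSyzygyOf R T L

/-- `M` is horizontally linked, i.e. `M ≅ λλM`. -/
def IsHorizontallyLinked (M : ModuleCat.{u} R) : Prop :=
  ∃ L L2 : ModuleCat.{u} R, IsLambda R M L ∧ IsLambda R L L2 ∧
    Nonempty (↥M ≃ₗ[R] ↥L2)

/-- `M` is stable: it has no non-zero projective direct summand. -/
def IsStable (M : ModuleCat.{u} R) : Prop :=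
  ∀ (P N : ModuleCat.{u} R), Module.Projective R ↥P →
    Nonempty (↥M ≃ₗ[R] (↥P × ↥N)) → Subsingleton ↥P

/-- `N` belongs to the Auslander class `A_C`. -/
def MemAuslanderClass (C N : ModuleCat.{u} R) : Prop :=
  Function.Bijective (TensorProduct.mk R ↥N ↥C) ∧
  (∀ i : ℕ, 0 < i → Subsingleton (TorM R C N i)) ∧
  (∀ i : ℕ, 0 < i → Subsingleton
    (ExtM R C (ModuleCat.of R (↥N ⊗[R] ↥C)) i))

/-- `R` is semiperfect: every finite `R`-module has a projective cover. -/
def IsSemiperfectRing : Prop :=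
  ∀ M : ModuleCat.{u} R, Module.Finite R ↥M →
    ∃ (P : ModuleCat.{u} R) (π : ↥P →ₗ[R] ↥M),
      Module.Finite R ↥P ∧ IsProjectiveCover R π

/-- Depth over a local ring, via Ext from the residue field. -/
def rdepth [IsLocalRing R] (M : ModuleCat.{u} R) : ℕ∞ :=
  sInf ((fun i : ℕ => (i : ℕ∞)) ''
    {i | ¬ Subsingleton
      (ExtM R (ModuleCat.of R (IsLocalRing.ResidueField R)) M i)})

/-- Projective dimension at most `n`. -/
def pdimLE : ℕ → ModuleCat.{u} R → Prop
  | 0, M => Module.Projective R ↥M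
  | n+1, M => ∃ (X K : ModuleCat.{u} R) (f : ↥K →ₗ[R] ↥X) (g : ↥X →ₗ[R] ↥M),
      Function.Injective f ∧ Function.Surjective g ∧
      LinearMap.ker g = LinearMap.range f ∧
      Module.Projective R ↥X ∧ pdimLE n K

/-- Projective dimension, as an element of `ℕ∞`. -/
def pdim (M : ModuleCat.{u} R) : ℕ∞ :=
  sInf ((fun n : ℕ => (n : ℕ∞)) '' {n | pdimLE R n M})

/-- `M` is `C`-`k`-torsionless. -/
def IsCkTorsionless (C M : ModuleCat.{u} R) (k : ℕ) : Prop :=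
  k = 0 ∨ ∀ T : ModuleCat.{u} R, IsTransposeC R C M T →
    ∀ i : ℕ, 1 ≤ i → i ≤ k → Subsingleton (ExtM R T C i)

/-- `M` is a `C`-syzygy: it embeds into `P ⊗_R C` with `P` finite projective. -/
def IsCSyzygy (C M : ModuleCat.{u} R) : Prop :=
  ∃ (P : ModuleCat.{u} R), Module.Finite R ↥P ∧ Module.Projective R ↥P ∧
    ∃ f : ↥M →ₗ[R] (↥P ⊗[R] ↥C), Function.Injective f


/-- There is an exact sequence `0 → N → X_k → ⋯ → X_1 → M → 0` of finite `R`-modules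
with `Ext_R^i(X_j, C) = 0` for all `i > 0` and all `j`. -/
def ExtVanishingChain (C : ModuleCat.{u} R) : ℕ → ModuleCat.{u} R → ModuleCat.{u} R → Prop
  | 0, N, M => Nonempty (↥N ≃ₗ[R] ↥M)
  | k+1, N, M => ∃ (X K : ModuleCat.{u} R) (f : ↥K →ₗ[R] ↥X) (g : ↥X →ₗ[R] ↥M),
      Function.Injective f ∧ Function.Surjective g ∧
      LinearMap.ker g = LinearMap.range f ∧
      Module.Finite R ↥X ∧ (∀ i : ℕ, 0 < i → Subsingleton (ExtM R X C i)) ∧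
      ExtVanishingChain C k N K

/-!
Let `0 → N → P₀ → M → 0` be exact with `P₀` finite projective, and let `P₁ → N` be a surjection
from a finite projective module, with kernel `K`. Schanuel's argument shows that the `G_C`-dimension
drops by one from `M` to `N`.

If `n = 1`, then `N` and `K` are totally `C`-reflexive. The exact sequence
`0 → N^C → P₁^C → K^C → 0` induces `0 → N^C / P₀^C → Tr_C(M) → K^C → 0`, where
`N^C / P₀^C = Ext^1(M, C)` and `K^C` has no higher `Ext(-, C)`, so `Tr_C(M)` and `Ext^1(M, C)` have
the same `Ext(-, C)` in positive degrees.

If `n > 1`, then `Ext^1(M, C) = 0` makes `P₀^C → P₁^C → P₂^C` exact for every finite free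
`P₂ → K → 0`, so that there is an exact sequence `0 → Tr_C(M) → P₂^C → Tr_C(N) → 0`. Dimension
shifting in this sequence and in `0 → N → P₀ → M → 0` reduces the claim for `(M, n, i)` to the claim
for `(N, n - 1, i + 1)`.
-/

section ExtLongExactSequence

variable {𝒜 : Type*} [Category* 𝒜] [Abelian 𝒜] [HasExt 𝒜]

open Abelian

theorem subsingleton_ext_of_retract {X Y : 𝒜} (r : Retract X Y) (Z : 𝒜) (i : ℕ)
    [Subsingleton (Ext Y Z i)] : Subsingleton (Ext X Z i) := by
  refine subsingleton_of_forall_eq 0 fun x => ?_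
  rw [← Ext.mk₀_id_comp x, ← r.retract, ← Ext.mk₀_comp_mk₀_assoc,
    Subsingleton.elim ((Ext.mk₀ r.r).comp x (zero_add i)) 0, Ext.comp_zero]

/-- The isomorphism `Ext X' Y i ≃ Ext X Y i` given by precomposition with an isomorphism
`X ≅ X'`. -/
def extLinearEquivOfIso (k : Type*) [CommRing k] [Linear k 𝒜] {X X' : 𝒜} (e : X ≅ X') (Y : 𝒜)
    (i : ℕ) : Ext X' Y i ≃ₗ[k] Ext X Y i :=
  LinearEquiv.ofLinearMap
    ((Ext.mk₀ e.hom).precompOfLinear k Y (zero_add i))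
    ((Ext.mk₀ e.inv).precompOfLinear k Y (zero_add i))
    (by ext x; simp) (by ext x; simp)

variable {S : ShortComplex 𝒜} (hS : S.ShortExact) (Y : 𝒜) (i : ℕ)
include hS

theorem subsingleton_ext_X₁ [Subsingleton (Ext S.X₂ Y i)] [Subsingleton (Ext S.X₃ Y (i + 1))] :
    Subsingleton (Ext S.X₁ Y i) := by
  refine subsingleton_of_forall_eq 0 fun x => ?_
  obtain ⟨y, rfl⟩ :=
    Ext.contravariant_sequence_exact₁ hS Y x (add_comm 1 i) (Subsingleton.elim _ _)
  rw [Subsingleton.elim y 0, Ext.comp_zero]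

theorem subsingleton_ext_X₂ [Subsingleton (Ext S.X₁ Y i)] [Subsingleton (Ext S.X₃ Y i)] :
    Subsingleton (Ext S.X₂ Y i) := by
  refine subsingleton_of_forall_eq 0 fun x => ?_
  obtain ⟨y, rfl⟩ := Ext.contravariant_sequence_exact₂ hS Y x (Subsingleton.elim _ _)
  rw [Subsingleton.elim y 0, Ext.comp_zero]

theorem subsingleton_ext_X₃ [Subsingleton (Ext S.X₁ Y i)] [Subsingleton (Ext S.X₂ Y (i + 1))] :
    Subsingleton (Ext S.X₃ Y (i + 1)) := by
  refine subsingleton_of_forall_eq 0 fun x => ?_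
  obtain ⟨y, rfl⟩ :=
    Ext.contravariant_sequence_exact₃ hS Y x (Subsingleton.elim _ _) (add_comm 1 i)
  rw [Subsingleton.elim y 0, Ext.comp_zero]

theorem extClass_comp_mk₀_eq_zero_iff {Z : 𝒜} (φ : S.X₁ ⟶ Z) :
    hS.extClass.comp (Ext.mk₀ φ) (add_zero 1) = 0 ↔ ∃ ψ, S.f ≫ ψ = φ := by
  constructor
  · intro hφ
    obtain ⟨y, hy⟩ := Ext.contravariant_sequence_exact₁ hS Z (Ext.mk₀ φ) (add_zero 1) hφ
    obtain ⟨ψ, rfl⟩ := Ext.homEquiv₀.symm.surjective y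
    exact ⟨ψ, Ext.homEquiv₀.symm.injective ((Ext.mk₀_comp_mk₀ S.f ψ).symm.trans hy)⟩
  · rintro ⟨ψ, rfl⟩
    rw [← Ext.mk₀_comp_mk₀]
    exact hS.extClass_comp_assoc _

variable (k : Type*) [CommRing k] [Linear k 𝒜]

/-- Dimension shifting: the connecting map `Ext S.X₁ Y i → Ext S.X₃ Y (i + 1)` of a short exact
sequence whose middle term is acyclic for `Ext(-, Y)` in the two degrees involved. -/
def extShiftLinearEquiv [Subsingleton (Ext S.X₂ Y i)] [Subsingleton (Ext S.X₂ Y (i + 1))] :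
    Ext S.X₁ Y i ≃ₗ[k] Ext S.X₃ Y (i + 1) :=
  LinearEquiv.ofBijective (hS.extClass.precompOfLinear k Y (add_comm 1 i)) <| by
    refine ⟨(injective_iff_map_eq_zero _).2 fun x hx => ?_, fun x => ?_⟩
    · obtain ⟨y, rfl⟩ := Ext.contravariant_sequence_exact₁ hS Y x (add_comm 1 i) hx
      rw [Subsingleton.elim y 0, Ext.comp_zero]
    · exact Ext.contravariant_sequence_exact₃ hS Y x (Subsingleton.elim _ _) (add_comm 1 i)

/-- The restriction map `Ext S.X₂ Y i → Ext S.X₁ Y i` of a short exact sequence whose last term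
is acyclic for `Ext(-, Y)` in the two degrees involved. -/
def extRestrictLinearEquiv [Subsingleton (Ext S.X₃ Y i)] [Subsingleton (Ext S.X₃ Y (i + 1))] :
    Ext S.X₂ Y i ≃ₗ[k] Ext S.X₁ Y i :=
  LinearEquiv.ofBijective ((Ext.mk₀ S.f).precompOfLinear k Y (zero_add i)) <| by
    refine ⟨(injective_iff_map_eq_zero _).2 fun x hx => ?_, fun x => ?_⟩
    · obtain ⟨y, rfl⟩ := Ext.contravariant_sequence_exact₂ hS Y x hx
      rw [Subsingleton.elim y 0, Ext.comp_zero]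
    · exact Ext.contravariant_sequence_exact₁ hS Y x (add_comm 1 i) (Subsingleton.elim _ _)

end ExtLongExactSequence

section ExtComparison

variable {k : Type*} [CommRing k] {𝒜 : Type*} [Category* 𝒜] [Abelian 𝒜] [Linear k 𝒜]
  [HasExt 𝒜] {X : 𝒜}

open Abelian

theorem extMk_smul (P : ProjectiveResolution X) {Y : 𝒜} {i : ℕ} (r : k) (f : P.complex.X i ⟶ Y)
    (hf : P.complex.d (i + 1) i ≫ f = 0) :
    P.extMk (r • f) (i + 1) rfl (by simp [hf]) = r • P.extMk f (i + 1) rfl hf := by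
  simp [Ext.smul_eq_comp_mk₀, P.extMk_comp_mk₀]

variable (k) in
/-- The class in `Ext X Y i` of an `i`-cocycle of `Hom(P, Y)`, where `P` is a projective resolution
of `X`. -/
def cocycleToExt (P : ProjectiveResolution X) (Y : 𝒜) (i : ℕ) :
    LinearMap.ker ((P.complex.linearYonedaObj k Y).d i (i + 1)).hom →ₗ[k] Ext X Y i where
  toFun f := P.extMk f.1 (i + 1) rfl f.2
  map_add' _ _ := (P.add_extMk _ _ _ _ _ _).symm
  map_smul' r f := extMk_smul P r f.1 f.2

theorem cocycleToExt_surjective (P : ProjectiveResolution X) (Y : 𝒜) (i : ℕ) :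
    Function.Surjective (cocycleToExt k P Y i) := fun x =>
  let ⟨f, hf, h⟩ := P.extMk_surjective x (i + 1) rfl
  ⟨⟨f, hf⟩, h⟩

theorem cocycleToExt_eq_zero_iff (P : ProjectiveResolution X) (Y : 𝒜) (i : ℕ)
    (f : LinearMap.ker ((P.complex.linearYonedaObj k Y).d (i + 1) (i + 2)).hom) :
    cocycleToExt k P Y (i + 1) f = 0 ↔
      ∃ g, ((P.complex.linearYonedaObj k Y).d i (i + 1)).hom g = f.1 :=
  P.extMk_eq_zero_iff _ (i + 2) rfl f.2 i rfl

variable (k) in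
/-- In positive degrees, the left derived functors of `Hom(-, Y)` compute `Abelian.Ext`, which
carries the long exact sequences. -/
def extLinearEquivAbelianExt [EnoughProjectives 𝒜] (X Y : 𝒜) (i : ℕ) :
    ((_root_.Ext k 𝒜 (i + 1)).obj (Opposite.op X)).obj Y ≃ₗ[k] Abelian.Ext X Y (i + 1) :=
  let P := projectiveResolution X
  let D := P.complex.linearYonedaObj k Y
  let S := D.sc' i (i + 1) (i + 2)
  have exact : Function.Exact S.moduleCatToCycles (cocycleToExt k P Y (i + 1)) := fun f =>
    (cocycleToExt_eq_zero_iff P Y i f).trans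
      (exists_congr fun _ => ⟨fun h => Subtype.ext h, congrArg Subtype.val⟩)
  (P.isoExt (i + 1) Y ≪≫ D.homologyIsoSc' i (i + 1) (i + 2) (by simp) (by simp) ≪≫
    S.moduleCatHomologyIso).toLinearEquiv ≪≫ₗ
    exact.linearEquivOfSurjective (cocycleToExt_surjective P Y (i + 1))

end ExtComparison

section Dual

variable {R} (C : ModuleCat.{u} R)

open Abelian

/-- The `C`-dual `A^C = Hom_R(A, C)`. -/
abbrev dual (A : ModuleCat.{u} R) : ModuleCat.{u} R := ModuleCat.of R (A →ₗ[R] C)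

/-- The complex `S.X₃^C → S.X₂^C → S.X₁^C`, in general exact only on the left. -/
abbrev dualShortComplex (S : ShortComplex (ModuleCat.{u} R)) : ShortComplex (ModuleCat.{u} R) :=
  ModuleCat.shortComplexOfCompEqZero (LinearMap.lcomp R C S.g.hom) (LinearMap.lcomp R C S.f.hom) <|
    by ext φ x; simp

/-- The cokernel of `f^C : B^C → A^C`. If `f` is a minimal projective presentation of `M`, this is
the transpose `Tr_C(M)`. -/
def dualCokernel {A B : ModuleCat.{u} R} (f : A →ₗ[R] B) : ModuleCat.{u} R :=
  ModuleCat.of R ((A →ₗ[R] C) ⧸ LinearMap.range (LinearMap.lcomp R C f))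

variable {S : ShortComplex (ModuleCat.{u} R)} (hS : S.ShortExact)

include hS in
theorem function_exact_of_shortExact : Function.Exact S.f.hom S.g.hom :=
  (ShortComplex.ShortExact.moduleCat_exact_iff_function_exact S).mp hS.exact

/-- The connecting homomorphism `S.X₁^C → Ext^1(S.X₃, C)` of a short exact sequence. -/
def connectingHom : (S.X₁ →ₗ[R] C) →ₗ[R] Ext S.X₃ C 1 :=
  hS.extClass.precompOfLinear R C (add_zero 1) ∘ₗ Ext.linearEquiv₀.symm.toLinearMap ∘ₗ
    (ModuleCat.homLinearEquiv (M := S.X₁) (N := C) (S := R)).symm.toLinearMap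

theorem exact_lcomp_connectingHom :
    Function.Exact (LinearMap.lcomp R C S.f.hom) (connectingHom C hS) := fun φ => by
  refine (extClass_comp_mk₀_eq_zero_iff hS (ModuleCat.ofHom φ)).trans ⟨?_, ?_⟩
  · rintro ⟨ψ, hψ⟩
    exact ⟨ψ.hom, congrArg ModuleCat.Hom.hom hψ⟩
  · rintro ⟨ψ, rfl⟩
    exact ⟨ModuleCat.ofHom ψ, rfl⟩

theorem connectingHom_surjective [Subsingleton (Ext S.X₂ C 1)] :
    Function.Surjective (connectingHom C hS) := fun x => by
  obtain ⟨y, hy⟩ := Ext.contravariant_sequence_exact₃ hS C x (Subsingleton.elim _ _) (add_zero 1)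
  obtain ⟨φ, rfl⟩ := (Ext.linearEquiv₀ (R := R)).symm.surjective y
  exact ⟨φ.hom, hy⟩

include hS

theorem lcomp_surjective [Subsingleton (Ext S.X₃ C 1)] :
    Function.Surjective (LinearMap.lcomp R C S.f.hom) := fun φ =>
  (exact_lcomp_connectingHom C hS φ).1 (Subsingleton.elim _ _)

theorem dualShortComplex_shortExact [Subsingleton (Ext S.X₃ C 1)] :
    (dualShortComplex C S).ShortExact :=
  ModuleCat.shortComplex_shortExact _
    (LinearMap.exact_lcomp_of_exact_of_surjective C (function_exact_of_shortExact hS)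
      hS.moduleCat_surjective_g)
    (LinearMap.lcomp_injective_of_surjective _ hS.moduleCat_surjective_g)
    (lcomp_surjective C hS)

theorem subsingleton_ext_one_of_lcomp_surjective [Subsingleton (Ext S.X₂ C 1)]
    (h : Function.Surjective (LinearMap.lcomp R C S.f.hom)) : Subsingleton (Ext S.X₃ C 1) := by
  refine subsingleton_of_forall_eq 0 fun x => ?_
  obtain ⟨φ, rfl⟩ := connectingHom_surjective C hS x
  exact (exact_lcomp_connectingHom C hS φ).2 (h φ)

omit hS in
/-- If `Ext^1(S.X₂, C) = 0`, the connecting homomorphism identifies the cokernel of the restriction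
map `S.X₂^C → S.X₁^C` with `Ext^1(S.X₃, C)`. -/
def dualCokernelLinearEquivExtOne [Subsingleton (Ext S.X₂ C 1)] :
    dualCokernel C S.f.hom ≃ₗ[R] Ext S.X₃ C 1 :=
  (exact_lcomp_connectingHom C hS).linearEquivOfSurjective (connectingHom_surjective C hS)

end Dual

section TotallyReflexive

variable {R} {C A B : ModuleCat.{u} R}

open Abelian

theorem subsingleton_extM_succ_iff (i : ℕ) :
    Subsingleton (ExtM R A C (i + 1)) ↔ Subsingleton (Ext A C (i + 1)) :=
  (extLinearEquivAbelianExt R A C i).toEquiv.subsingleton_congr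

theorem isTotallyCReflexive_iff :
    IsTotallyCReflexive R C A ↔ Module.Finite R A ∧ Function.Bijective (bidualityMap R C A) ∧
      (∀ i, Subsingleton (Ext A C (i + 1))) ∧ ∀ i, Subsingleton (Ext (dual C A) C (i + 1)) := by
  have forall_pos_iff (D : ModuleCat.{u} R) : (∀ i, 0 < i → Subsingleton (ExtM R D C i)) ↔
      ∀ i, Subsingleton (Ext D C (i + 1)) :=
    ⟨fun h i => (subsingleton_extM_succ_iff i).1 (h _ i.succ_pos), fun h i hi => by
      obtain ⟨j, rfl⟩ := Nat.exists_eq_succ_of_ne_zero hi.ne'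
      exact (subsingleton_extM_succ_iff j).2 (h j)⟩
  rw [IsTotallyCReflexive, forall_pos_iff, forall_pos_iff]

variable (C) in
theorem bidualityMap_naturality (f : A →ₗ[R] B) :
    LinearMap.lcomp R C (LinearMap.lcomp R C f) ∘ₗ bidualityMap R C A = bidualityMap R C B ∘ₗ f :=
  rfl

theorem leftInverse_of_retract (r : Retract A B) : Function.LeftInverse r.r.hom r.i.hom :=
  LinearMap.congr_fun (congrArg ModuleCat.Hom.hom r.retract)

theorem bidualityMap_bijective_of_retract (r : Retract A B)
    (h : Function.Bijective (bidualityMap R C B)) : Function.Bijective (bidualityMap R C A) := by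
  constructor
  · refine Function.Injective.of_comp (f := LinearMap.lcomp R C (LinearMap.lcomp R C r.i.hom)) ?_
    exact h.injective.comp (leftInverse_of_retract r).injective
  · refine Function.Surjective.of_comp (g := r.r.hom) ?_
    refine Function.Surjective.comp (g := LinearMap.lcomp R C (LinearMap.lcomp R C r.r.hom))
      (fun Φ => ⟨Φ ∘ₗ LinearMap.lcomp R C r.i.hom, ?_⟩) h.surjective
    ext φ
    exact congrArg Φ (LinearMap.ext fun a => congrArg φ (leftInverse_of_retract r a))

namespace IsTotallyCReflexive

theorem finite (h : IsTotallyCReflexive R C A) : Module.Finite R A := h.1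

theorem subsingleton_ext (h : IsTotallyCReflexive R C A) (i : ℕ) :
    Subsingleton (Ext A C (i + 1)) :=
  (isTotallyCReflexive_iff.1 h).2.2.1 i

theorem subsingleton_ext_dual (h : IsTotallyCReflexive R C A) (i : ℕ) :
    Subsingleton (Ext (dual C A) C (i + 1)) :=
  (isTotallyCReflexive_iff.1 h).2.2.2 i

theorem of_retract (r : Retract A B) (h : IsTotallyCReflexive R C B) :
    IsTotallyCReflexive R C A := by
  have := h.finite
  have := h.subsingleton_ext
  have := h.subsingleton_ext_dual
  let dualRetract : Retract (dual C A) (dual C B) :=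
    { i := ModuleCat.ofHom (LinearMap.lcomp R C r.r.hom)
      r := ModuleCat.ofHom (LinearMap.lcomp R C r.i.hom)
      retract := ModuleCat.hom_ext <| LinearMap.ext fun φ => LinearMap.ext fun a =>
        congrArg φ (leftInverse_of_retract r a) }
  exact isTotallyCReflexive_iff.2 ⟨
    Module.Finite.of_surjective r.r.hom (leftInverse_of_retract r).surjective,
    bidualityMap_bijective_of_retract r h.2.1, fun i => subsingleton_ext_of_retract r C (i + 1),
    fun i => subsingleton_ext_of_retract dualRetract C (i + 1)⟩

variable {S : ShortComplex (ModuleCat.{u} R)} (hS : S.ShortExact)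
include hS

theorem X₁_of_shortExact [IsNoetherianRing R] (h₂ : IsTotallyCReflexive R C S.X₂)
    (h₃ : IsTotallyCReflexive R C S.X₃) : IsTotallyCReflexive R C S.X₁ := by
  have := h₂.finite
  have := h₂.subsingleton_ext
  have := h₃.subsingleton_ext
  have := h₂.subsingleton_ext_dual
  have := h₃.subsingleton_ext_dual
  have hdual := dualShortComplex_shortExact C hS
  have bijective : Function.Bijective (bidualityMap R C S.X₁) :=
    LinearMap.bijective_of_bijective_of_injective_of_left_exact S.f.hom S.g.hom
      (LinearMap.lcomp R C (LinearMap.lcomp R C S.f.hom))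
      (LinearMap.lcomp R C (LinearMap.lcomp R C S.g.hom)) _ _ _
      (bidualityMap_naturality C _) (bidualityMap_naturality C _)
      (function_exact_of_shortExact hS)
      (LinearMap.exact_lcomp_of_exact_of_surjective C (function_exact_of_shortExact hdual)
        hdual.moduleCat_surjective_g) h₂.2.1 h₃.2.1.injective hS.moduleCat_injective_f
      (LinearMap.lcomp_injective_of_surjective _ hdual.moduleCat_surjective_g)
  have bidual_surjective : Function.Surjective
      (LinearMap.lcomp R C (LinearMap.lcomp R C S.g.hom)) :=
    Function.Surjective.of_comp (g := bidualityMap R C S.X₂) <|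
      h₃.2.1.surjective.comp hS.moduleCat_surjective_g
  refine isTotallyCReflexive_iff.2 ⟨Module.Finite.of_injective S.f.hom hS.moduleCat_injective_f,
    bijective, fun i => subsingleton_ext_X₁ hS C (i + 1), fun i => ?_⟩
  cases i with
  | zero => exact subsingleton_ext_one_of_lcomp_surjective C hdual bidual_surjective
  | succ i => exact subsingleton_ext_X₃ hdual C (i + 1)

theorem X₂_of_shortExact (h₁ : IsTotallyCReflexive R C S.X₁)
    (h₃ : IsTotallyCReflexive R C S.X₃) : IsTotallyCReflexive R C S.X₂ := by
  have := h₁.finite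
  have := h₃.finite
  have := h₁.subsingleton_ext
  have := h₃.subsingleton_ext
  have := h₁.subsingleton_ext_dual
  have := h₃.subsingleton_ext_dual
  have hdual := dualShortComplex_shortExact C hS
  have hbidual := dualShortComplex_shortExact C hdual
  let τ : S ⟶ dualShortComplex C (dualShortComplex C S) :=
    { τ₁ := ModuleCat.ofHom (bidualityMap R C S.X₁)
      τ₂ := ModuleCat.ofHom (bidualityMap R C S.X₂)
      τ₃ := ModuleCat.ofHom (bidualityMap R C S.X₃) }
  have bijective : Function.Bijective (bidualityMap R C S.X₂) := by
    have : IsIso τ.τ₁ := (ConcreteCategory.isIso_iff_bijective _).2 h₁.2.1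
    have : IsIso τ.τ₃ := (ConcreteCategory.isIso_iff_bijective _).2 h₃.2.1
    exact (ConcreteCategory.isIso_iff_bijective τ.τ₂).1
      (ShortComplex.isIso₂_of_shortExact_of_isIso₁₃ τ hS hbidual)
  exact isTotallyCReflexive_iff.2 ⟨Module.Finite.of_exact (function_exact_of_shortExact hS)
      hS.moduleCat_surjective_g, bijective,
    fun i => subsingleton_ext_X₂ hS C (i + 1), fun i => subsingleton_ext_X₂ hdual C (i + 1)⟩

omit hS

theorem of_linearEquiv (e : A ≃ₗ[R] B) (h : IsTotallyCReflexive R C B) :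
    IsTotallyCReflexive R C A :=
  of_retract (Retract.ofIso e.toModuleIso) h

theorem prod (hA : IsTotallyCReflexive R C A) (hB : IsTotallyCReflexive R C B) :
    IsTotallyCReflexive R C (ModuleCat.of R (A × B)) :=
  X₂_of_shortExact
    (S := ModuleCat.shortComplexOfCompEqZero (LinearMap.inl R A B) (LinearMap.snd R A B)
      (LinearMap.snd_comp_inl R A B))
    (ModuleCat.shortComplex_shortExact _ Function.Exact.inl_snd LinearMap.inl_injective
      LinearMap.snd_surjective) hA hB

end IsTotallyCReflexive

namespace IsSemidualizing

theorem bidualityMap_ring_bijective (hC : IsSemidualizing R C) :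
    Function.Bijective (bidualityMap R C (ModuleCat.of R R)) := by
  let e := LinearMap.ringLmapEquivSelf R R C
  have biduality_eq : bidualityMap R C (ModuleCat.of R R) =
      fun r : R => (r • LinearMap.id : C →ₗ[R] C) ∘ₗ e.toLinearMap := by
    ext r φ
    exact (congrArg φ (mul_one r)).symm.trans (φ.map_smul r 1)
  rw [biduality_eq]
  exact (e.congrLeft C R).symm.bijective.comp hC.2.1

theorem isTotallyCReflexive_ring (hC : IsSemidualizing R C) :
    IsTotallyCReflexive R C (ModuleCat.of R R) := by
  have (i : ℕ) : Subsingleton (Ext C C (i + 1)) :=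
    (subsingleton_extM_succ_iff i).1 (hC.2.2 _ i.succ_pos)
  have : Projective (ModuleCat.of R R) :=
    ModuleCat.projective_of_free (Module.Basis.singleton Unit R)
  exact isTotallyCReflexive_iff.2 ⟨inferInstanceAs (Module.Finite R R),
    hC.bidualityMap_ring_bijective, fun i => Ext.subsingleton_of_projective _ _ i, fun i =>
      (extLinearEquivOfIso R (LinearMap.ringLmapEquivSelf R R C).toModuleIso C
        (i + 1)).symm.toEquiv.subsingleton⟩

theorem isTotallyCReflexive_fin_fun (hC : IsSemidualizing R C) (n : ℕ) :
    IsTotallyCReflexive R C (ModuleCat.of R (Fin n → R)) := by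
  induction n with
  | zero =>
    exact .of_retract ⟨0, 0, ModuleCat.hom_ext (LinearMap.ext fun _ => Subsingleton.elim _ _)⟩
      hC.isTotallyCReflexive_ring
  | succ n ih =>
    exact .of_linearEquiv (Fin.consLinearEquiv R fun _ => R).symm
      (hC.isTotallyCReflexive_ring.prod ih)

theorem isTotallyCReflexive_of_projective (hC : IsSemidualizing R C) [Module.Finite R A]
    [Module.Projective R A] : IsTotallyCReflexive R C A := by
  obtain ⟨n, f, hf⟩ := Module.Finite.exists_fin' R A
  obtain ⟨g, hg⟩ := Module.projective_lifting_property f LinearMap.id hf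
  exact .of_retract ⟨ModuleCat.ofHom g, ModuleCat.ofHom f, ModuleCat.hom_ext hg⟩
    (hC.isTotallyCReflexive_fin_fun n)

end IsSemidualizing

end TotallyReflexive

section GCDimension

variable {R} {C : ModuleCat.{u} R}

section LinearAlgebra

variable {A B D L X K P M : Type*} [AddCommGroup A] [Module R A] [AddCommGroup B] [Module R B]
  [AddCommGroup D] [Module R D] [AddCommGroup L] [Module R L] [AddCommGroup X] [Module R X]
  [AddCommGroup K] [Module R K] [AddCommGroup P] [Module R P] [AddCommGroup M] [Module R M]

theorem exists_exact_ker_comp {f : A →ₗ[R] B} {g : B →ₗ[R] D} {f' : L →ₗ[R] X} {g' : X →ₗ[R] B}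
    (hf : Function.Injective f) (hfg : Function.Exact f g) (hf' : Function.Injective f')
    (hfg' : Function.Exact f' g') (hg' : Function.Surjective g') :
    ∃ (j : L →ₗ[R] LinearMap.ker (g ∘ₗ g')) (p : LinearMap.ker (g ∘ₗ g') →ₗ[R] A),
      Function.Injective j ∧ Function.Exact j p ∧ Function.Surjective p := by
  let j : L →ₗ[R] LinearMap.ker (g ∘ₗ g') := f'.codRestrict _ fun l => by
    simp [hfg'.apply_apply_eq_zero]
  let p : LinearMap.ker (g ∘ₗ g') →ₗ[R] A :=
    (g' ∘ₗ Submodule.subtype _).codRestrictOfInjective f hf fun x => (hfg _).1 x.2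
  have f_p (x) : f (p x) = g' x := LinearMap.codRestrictOfInjective_comp_apply ..
  refine ⟨j, p, fun x y h => hf' (congrArg Subtype.val h), fun x => ?_, fun a => ?_⟩
  · rw [← map_eq_zero_iff f hf, f_p, hfg' x]
    exact exists_congr fun l => ⟨fun h => Subtype.ext h, congrArg Subtype.val⟩
  · obtain ⟨x, hx⟩ := hg' (f a)
    exact ⟨⟨x, by simp [hx, hfg.apply_apply_eq_zero]⟩, hf ((f_p _).trans hx)⟩

/-- The sequence is the mapping cone of a lift of the identity of `M` to presentations. -/
theorem exact_prod_coprod_neg {ι : L →ₗ[R] P} {π : P →ₗ[R] M} {f : K →ₗ[R] X} {g : X →ₗ[R] M}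
    (hιπ : Function.Exact ι π) (hf : Function.Injective f) (hfg : Function.Exact f g)
    {j : L →ₗ[R] K} {l : P →ₗ[R] X} (hl : g ∘ₗ l = π) (hj : f ∘ₗ j = l ∘ₗ ι) :
    Function.Exact (j.prod ι) ((-f).coprod l) := by
  have hl (p) : g (l p) = π p := LinearMap.congr_fun hl p
  have hj (x) : f (j x) = l (ι x) := LinearMap.congr_fun hj x
  rintro ⟨a, p⟩
  simp only [LinearMap.coprod_apply, LinearMap.neg_apply, neg_add_eq_zero, Set.mem_range,
    LinearMap.prod_apply, Function.prod, Prod.mk.injEq]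
  constructor
  · intro h
    obtain ⟨x, rfl⟩ := (hιπ p).1 (by rw [← hl, ← h, hfg.apply_apply_eq_zero])
    exact ⟨x, hf ((hj x).trans h.symm), rfl⟩
  · rintro ⟨x, rfl, rfl⟩
    exact hj x

theorem coprod_neg_surjective {π : P →ₗ[R] M} {f : K →ₗ[R] X} {g : X →ₗ[R] M}
    (hπ : Function.Surjective π) (hfg : Function.Exact f g) {l : P →ₗ[R] X} (hl : g ∘ₗ l = π) :
    Function.Surjective ((-f).coprod l) := fun x => by
  obtain ⟨p, hp⟩ := hπ (g x)
  have hlp : g (l p) = g x := (LinearMap.congr_fun hl p).trans hp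
  obtain ⟨a, ha⟩ := (hfg (l p - x)).1 (by rw [map_sub, hlp, sub_self])
  exact ⟨(a, p), by simp [ha]⟩

end LinearAlgebra

namespace gcdimLE

theorem X₁_of_shortExact [IsNoetherianRing R] {n : ℕ} {S : ShortComplex (ModuleCat.{u} R)}
    (hS : S.ShortExact) (h₂ : gcdimLE R C n S.X₂) (h₃ : IsTotallyCReflexive R C S.X₃) :
    gcdimLE R C n S.X₁ := by
  cases n with
  | zero => exact IsTotallyCReflexive.X₁_of_shortExact hS h₂ h₃
  | succ n =>
    obtain ⟨X, L, f, g, hf, hg, hfg, hX, hL⟩ := h₂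
    obtain ⟨j, p, hj, hjp, hp⟩ := exists_exact_ker_comp hS.moduleCat_injective_f
      (function_exact_of_shortExact hS) hf (LinearMap.exact_iff.2 hfg) hg
    have ker_reflexive := IsTotallyCReflexive.X₁_of_shortExact
      (LinearMap.shortExact_shortComplexKer (f := S.g.hom ∘ₗ g)
        (hS.moduleCat_surjective_g.comp hg)) hX h₃
    exact ⟨ModuleCat.of R (LinearMap.ker (S.g.hom ∘ₗ g)), L, j, p, hj, hp,
      LinearMap.exact_iff.1 hjp, ker_reflexive, hL⟩

theorem prod {n : ℕ} {A P : ModuleCat.{u} R} (hA : gcdimLE R C n A)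
    (hP : IsTotallyCReflexive R C P) : gcdimLE R C n (ModuleCat.of R (A × P)) := by
  cases n with
  | zero => exact IsTotallyCReflexive.prod hA hP
  | succ n =>
    obtain ⟨X, L, f, g, hf, hg, hfg, hX, hL⟩ := hA
    refine ⟨ModuleCat.of R (X × P), L, LinearMap.inl R X P ∘ₗ f, g.prodMap LinearMap.id,
      LinearMap.inl_injective.comp hf, hg.prodMap Function.surjective_id, ?_, hX.prod hP, hL⟩
    rw [LinearMap.ker_prodMap, LinearMap.ker_id, hfg, LinearMap.range_comp,
      Submodule.map_inl]

theorem syzygy [IsNoetherianRing R] (hC : IsSemidualizing R C) {n : ℕ}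
    {S : ShortComplex (ModuleCat.{u} R)} (hS : S.ShortExact) [Module.Finite R S.X₂]
    [Module.Projective R S.X₂] (h : gcdimLE R C (n + 1) S.X₃) : gcdimLE R C n S.X₁ := by
  obtain ⟨X, K, f, g, hf, hg, hfg, hX, hK⟩ := h
  replace hfg := LinearMap.exact_iff.2 hfg
  obtain ⟨l, hl⟩ := Module.projective_lifting_property g S.g.hom hg
  have hS_exact := function_exact_of_shortExact hS
  have l_mem_range (x : S.X₁) : l (S.f.hom x) ∈ LinearMap.range f := (hfg _).1 <|
    (LinearMap.congr_fun hl _).trans (hS_exact.apply_apply_eq_zero x)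
  let j : S.X₁ →ₗ[R] K := (l ∘ₗ S.f.hom).codRestrictOfInjective f hf l_mem_range
  have cone_exact : Function.Exact (j.prod S.f.hom) ((-f).coprod l) :=
    exact_prod_coprod_neg hS_exact hf hfg hl (LinearMap.codRestrictOfInjective_comp ..)
  have cone_injective : Function.Injective (j.prod S.f.hom) := fun _ _ hxy =>
    hS.moduleCat_injective_f (congrArg Prod.snd hxy)
  exact X₁_of_shortExact
    (S := ModuleCat.shortComplexOfCompEqZero (j.prod S.f.hom) ((-f).coprod l)
      cone_exact.linearMap_comp_eq_zero)
    (ModuleCat.shortComplex_shortExact _ cone_exact cone_injective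
      (coprod_neg_surjective hS.moduleCat_surjective_g hfg hl))
    (hK.prod hC.isTotallyCReflexive_of_projective) hX

end gcdimLE

end GCDimension

section CokernelSequences

universe v

variable {R} {A B D E : Type v} [AddCommGroup A] [Module R A] [AddCommGroup B] [Module R B]
  [AddCommGroup D] [Module R D] [AddCommGroup E] [Module R E]
  {f : A →ₗ[R] B} {g : B →ₗ[R] D} {h : D →ₗ[R] E}

/-- The sequence `B ⧸ range f → D → D ⧸ range g` attached to an exact sequence `A → B → D`. -/
abbrev cokernelShortComplex (hfg : Function.Exact f g) : ShortComplex (ModuleCat.{v} R) :=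
  ModuleCat.shortComplexOfCompEqZero
    ((LinearMap.range f).liftQ g (LinearMap.range_le_ker_iff.2 hfg.linearMap_comp_eq_zero))
    (LinearMap.range g).mkQ (by ext x; simp)

theorem cokernelShortComplex_shortExact (hfg : Function.Exact f g) :
    (cokernelShortComplex hfg).ShortExact :=
  ModuleCat.shortComplex_shortExact _
    (LinearMap.exact_iff.2 ((Submodule.ker_mkQ _).trans (Submodule.range_liftQ _ _ _).symm))
    (LinearMap.injective_range_liftQ_of_exact hfg) (Submodule.mkQ_surjective _)

theorem range_le_comap_range_comp (f : A →ₗ[R] B) (g : B →ₗ[R] D) :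
    LinearMap.range f ≤ (LinearMap.range (g ∘ₗ f)).comap g := by
  rw [← Submodule.map_le_iff_le_comap, LinearMap.range_comp]

theorem range_comp_le_ker (f : A →ₗ[R] B) (hgh : Function.Exact g h) :
    LinearMap.range (g ∘ₗ f) ≤ LinearMap.ker h :=
  (LinearMap.range_comp_le_range f g).trans (LinearMap.exact_iff.1 hgh).ge

/-- The sequence `B ⧸ range f → D ⧸ range (g ∘ f) → E` of cokernels attached to an exact sequence
`B → D → E` and a map `f : A → B`. -/
abbrev cokernelCompShortComplex (f : A →ₗ[R] B) (hgh : Function.Exact g h) :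
    ShortComplex (ModuleCat.{v} R) :=
  ModuleCat.shortComplexOfCompEqZero
    ((LinearMap.range f).mapQ (LinearMap.range (g ∘ₗ f)) g (range_le_comap_range_comp f g))
    ((LinearMap.range (g ∘ₗ f)).liftQ h (range_comp_le_ker f hgh))
    (by ext b; simp [hgh.apply_apply_eq_zero])

theorem cokernelCompShortComplex_shortExact (f : A →ₗ[R] B) (hg : Function.Injective g)
    (hgh : Function.Exact g h) (hh : Function.Surjective h) :
    (cokernelCompShortComplex f hgh).ShortExact := by
  have injective : Function.Injective
      ((LinearMap.range f).mapQ _ g (range_le_comap_range_comp f g)) := by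
    rw [← LinearMap.ker_eq_bot, Submodule.ker_mapQ, LinearMap.range_comp,
      Submodule.comap_map_eq_of_injective hg, Submodule.mkQ_map_self]
  have exact : Function.Exact ((LinearMap.range f).mapQ _ g (range_le_comap_range_comp f g))
      ((LinearMap.range (g ∘ₗ f)).liftQ h (range_comp_le_ker f hgh)) := by
    rw [LinearMap.exact_iff, Submodule.ker_liftQ, Submodule.range_mapQ,
      LinearMap.exact_iff.1 hgh]
  exact ModuleCat.shortComplex_shortExact _ exact injective
    (LinearMap.surjective_range_liftQ (range_comp_le_ker f hgh) hh)

end CokernelSequences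

section Transpose

variable {R} {C : ModuleCat.{u} R} {S : ShortComplex (ModuleCat.{u} R)} {P : ModuleCat.{u} R}
  {d : P →ₗ[R] S.X₁}

open Abelian

theorem exact_lcomp_lcomp_comp (hS : S.ShortExact) (hd : Function.Surjective d)
    [Subsingleton (Ext S.X₃ C 1)] {Q : ModuleCat.{u} R} {q : Q →ₗ[R] LinearMap.ker d}
    (hq : Function.Surjective q) :
    Function.Exact (LinearMap.lcomp R C (S.f.hom ∘ₗ d))
      (LinearMap.lcomp R C ((LinearMap.ker d).subtype ∘ₗ q)) := by
  have exact_d : Function.Exact (LinearMap.lcomp R C d)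
      (LinearMap.lcomp R C (LinearMap.ker d).subtype) :=
    LinearMap.exact_lcomp_of_exact_of_surjective C (LinearMap.exact_subtype_ker_map d) hd
  exact (lcomp_surjective C hS).comp_exact_iff_exact.2 <|
    (LinearMap.lcomp_injective_of_surjective q hq).comp_exact_iff_exact.2 exact_d

variable [IsNoetherianRing R] [Module.Finite R P] [Module.Projective R P]
  [Module.Finite R S.X₂] [Module.Projective R S.X₂]

theorem nonempty_ext_dualCokernel_linearEquiv_of_gcdimLE_one (hC : IsSemidualizing R C)
    (hS : S.ShortExact) (hd : Function.Surjective d) (h : gcdimLE R C 1 S.X₃) (i : ℕ) :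
    Nonempty (Ext (dualCokernel C (S.f.hom ∘ₗ d)) C (i + 1) ≃ₗ[R]
      Ext (ModuleCat.of R (Ext S.X₃ C 1)) C (i + 1)) := by
  have hker : d.shortComplexKer.ShortExact := LinearMap.shortExact_shortComplexKer hd
  have syzygy_reflexive : IsTotallyCReflexive R C S.X₁ := gcdimLE.syzygy hC hS h
  have ker_reflexive : IsTotallyCReflexive R C d.shortComplexKer.X₁ :=
    .X₁_of_shortExact hker hC.isTotallyCReflexive_of_projective syzygy_reflexive
  have := syzygy_reflexive.subsingleton_ext
  have := ker_reflexive.subsingleton_ext_dual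
  have := (hC.isTotallyCReflexive_of_projective (A := S.X₂)).subsingleton_ext
  have hdual := dualShortComplex_shortExact C hker
  have hcoker := cokernelCompShortComplex_shortExact (LinearMap.lcomp R C S.f.hom)
    hdual.moduleCat_injective_f (function_exact_of_shortExact hdual) hdual.moduleCat_surjective_g
  exact ⟨extRestrictLinearEquiv hcoker C (i + 1) R ≪≫ₗ
    extLinearEquivOfIso R (dualCokernelLinearEquivExtOne C hS).symm.toModuleIso C (i + 1)⟩

theorem nonempty_ext_dualCokernel_linearEquiv (hC : IsSemidualizing R C) {n : ℕ}
    (hS : S.ShortExact) (hd : Function.Surjective d) (h : gcdimLE R C (n + 1) S.X₃)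
    (vanishing : ∀ j < n, Subsingleton (Ext S.X₃ C (j + 1))) (i : ℕ) :
    Nonempty (Ext (dualCokernel C (S.f.hom ∘ₗ d)) C (i + 1) ≃ₗ[R]
      Ext (ModuleCat.of R (Ext S.X₃ C (n + 1))) C (i + n + 1)) := by
  induction n generalizing S P i with
  | zero => exact nonempty_ext_dualCokernel_linearEquiv_of_gcdimLE_one hC hS hd h i
  | succ n ih =>
    have := vanishing 0 n.succ_pos
    have := (hC.isTotallyCReflexive_of_projective (A := S.X₂)).subsingleton_ext
    have syzygy_vanishing (j : ℕ) (hj : j < n) : Subsingleton (Ext S.X₁ C (j + 1)) :=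
      have := vanishing (j + 1) (Nat.succ_lt_succ hj)
      subsingleton_ext_X₁ hS C (j + 1)
    obtain ⟨m, q, hq⟩ := Module.Finite.exists_fin' R (LinearMap.ker d)
    let F := ModuleCat.of R (Fin m → R)
    have := (hC.isTotallyCReflexive_fin_fun m).subsingleton_ext_dual
    obtain ⟨e⟩ := ih (P := F) (LinearMap.shortExact_shortComplexKer hd) hq
      (gcdimLE.syzygy hC hS h) syzygy_vanishing (i + 1)
    have hcoker := cokernelShortComplex_shortExact
      (exact_lcomp_lcomp_comp (C := C) (Q := F) hS hd hq)
    rw [show i + (n + 1) + 1 = i + 1 + n + 1 by lia]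
    exact ⟨extShiftLinearEquiv hcoker C (i + 1) R ≪≫ₗ e ≪≫ₗ
      extLinearEquivOfIso R (extShiftLinearEquiv hS C (n + 1) R).symm.toModuleIso C _⟩

end Transpose

section ReducedGCPerfect

variable {R} {C M : ModuleCat.{u} R}

theorem gcdimLE_of_gcdim_eq {n : ℕ} (h : gcdim R C M = n) : gcdimLE R C n M := by
  have nonempty : ((fun n : ℕ => (n : ℕ∞)) '' {n | gcdimLE R C n M}).Nonempty := by
    by_contra! hempty
    simp [gcdim, hempty] at h
  obtain ⟨k, hk, hkn⟩ := csInf_mem nonempty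
  exact Nat.cast_inj.1 (hkn.trans h) ▸ hk

theorem rgrade_pos : 0 < rgrade R C M := by
  refine zero_lt_one.trans_le (le_sInf ?_)
  rintro _ ⟨j, ⟨hj, -⟩, rfl⟩
  exact Nat.one_le_cast.2 hj

theorem subsingleton_extM_of_lt_rgrade {i : ℕ} (hi : 0 < i) (h : i < rgrade R C M) :
    Subsingleton (ExtM R M C i) := by
  by_contra hns
  exact h.not_ge (sInf_le ⟨i, ⟨hi, hns⟩, rfl⟩)

end ReducedGCPerfect

section StatementGeneral

variable {R} [IsNoetherianRing R] {C M P₁ P₀ T : ModuleCat.{u} R}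

theorem statement2_general [Module.Finite R P₁] [Module.Projective R P₁] [Module.Finite R P₀]
    [Module.Projective R P₀] (hC : IsSemidualizing R C) {d : P₁ →ₗ[R] P₀} {π : P₀ →ₗ[R] M}
    (hdπ : Function.Exact d π) (hπ : Function.Surjective π) (e : T ≃ₗ[R] dualCokernel C d)
    {n : ℕ} (hn : 0 < n) (hM : gcdimLE R C n M)
    (vanishing : ∀ j, 0 < j → j < n → Subsingleton (ExtM R M C j))
    {i : ℕ} (hi : 0 < i) :
    Nonempty (ExtM R T C i ≃ₗ[R] ExtM R (ExtM R M C n) C (i + n - 1)) := by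
  obtain ⟨n, rfl⟩ := Nat.exists_eq_add_one.2 hn
  obtain ⟨i, rfl⟩ := Nat.exists_eq_add_one.2 hi
  let d' : P₁ →ₗ[R] LinearMap.ker π := d.codRestrict _ hdπ.apply_apply_eq_zero
  have hd' : Function.Surjective d' := fun x =>
    let ⟨p, hp⟩ := (hdπ x).1 x.2
    ⟨p, Subtype.ext hp⟩
  obtain ⟨e'⟩ := nonempty_ext_dualCokernel_linearEquiv hC
    (LinearMap.shortExact_shortComplexKer hπ) hd' hM
    (fun j hj => (subsingleton_extM_succ_iff j).1 (vanishing _ j.succ_pos (Nat.succ_lt_succ hj))) i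
  rw [show i + 1 + (n + 1) - 1 = i + n + 1 by lia]
  exact ⟨extLinearEquivAbelianExt R T C i ≪≫ₗ extLinearEquivOfIso R e.symm.toModuleIso C (i + 1) ≪≫ₗ
    e' ≪≫ₗ extLinearEquivOfIso R (extLinearEquivAbelianExt R M C n).toModuleIso C _ ≪≫ₗ
    (extLinearEquivAbelianExt R (ExtM R M C (n + 1)) C (i + n)).symm⟩

end StatementGeneral

/-- if `M` is reduced `G_C`-perfect of `G_C`-dimension `n`, then
`Ext_R^i(Tr_C(M), C) ≅ Ext_R^{i+n-1}(Ext_R^n(M,C), C)` for all `i > 0`. -/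
theorem statement2 [IsNoetherianRing R] (hsp : IsSemiperfectRing R)
    (C : ModuleCat.{u} R) (hC : IsSemidualizing R C)
    (M : ModuleCat.{u} R) (hMfin : Module.Finite R ↥M)
    (n : ℕ) (hred : IsReducedGCPerfect R C M) (hdim : gcdim R C M = n) :
    ∀ T : ModuleCat.{u} R, IsTransposeC R C M T →
      ∀ i : ℕ, 0 < i →
        Nonempty (↥(ExtM R T C i) ≃ₗ[R]
          ↥(ExtM R (ExtM R M C n) C (i + n - 1))) := by
  rintro T ⟨P₁, P₀, d, π, ⟨_, _, ⟨_, hπ, -⟩, hdπ, _, -⟩, ⟨e⟩⟩ i hi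
  have hgrade : rgrade R C M = n := hred.2.trans hdim
  exact statement2_general hC (LinearMap.exact_iff.2 hdπ.symm) hπ e
    (Nat.cast_pos.1 (hgrade ▸ rgrade_pos)) (gcdimLE_of_gcdim_eq hdim)
    (fun j hj hjn => subsingleton_extM_of_lt_rgrade hj (hgrade ▸ Nat.cast_lt.2 hjn)) hi

end
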